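/- Let h_1, …, h_t ∈ ℝ[x,y], let α ∈ ℕ^n, β ∈ ℕ^p and N ∈ ℝ, and suppose both N + x^α y^β and N − x^α y^β belong to the truncated quadratic module Q(l). Then every real sequence z = (z_{αβ}) with z_{00} = 1, M_l(z) ⪰ 0, and M_{l−v_j}(h_j z) ⪰ 0 for j = 1, …, t satisfies |z_{αβ}| = |L_z(x^α y^β)| ≤ N. -/

import Mathlib

open MeasureTheory MvPolynomial Set

noncomputable section

/-- The Riesz-like linear functional `L_z` associated with a double-indexed real
sequence `z = (z_{αβ})`, sending `Σ f_{αβ} x^α y^β` to `Σ f_{αβ} z_{αβ}`. -/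
def Lz (n p : ℕ) (z : (Fin n → ℕ) → (Fin p → ℕ) → ℝ)
    (q : MvPolynomial (Fin n ⊕ Fin p) ℝ) : ℝ :=
  ∑ d ∈ q.support, q.coeff d * z (fun k => d (Sum.inl k)) (fun l => d (Sum.inr l))

/-- Every monomial `x^α y^β` of `q` satisfies `|α| ≤ i` and `|β| ≤ i`, i.e. `q` is in the
span of the monomial basis indexing the moment matrix `M_i`. -/
def DegOK (n p : ℕ) (i : ℕ) (q : MvPolynomial (Fin n ⊕ Fin p) ℝ) : Prop :=
  ∀ d ∈ q.support, (∑ k, d (Sum.inl k)) ≤ i ∧ (∑ l, d (Sum.inr l)) ≤ i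

/-- `⌈deg h / 2⌉`. -/
def halfDeg {σ : Type*} (h : MvPolynomial σ ℝ) : ℕ := (h.totalDegree + 1) / 2

/-- The truncated quadratic module `Q(l)` generated by `h_1, …, h_t`: elements of the
form `σ_0 + Σ_j σ_j h_j` with `σ_j` sums of squares, `deg σ_0 ≤ 2l` and
`deg (σ_j h_j) ≤ 2l`. -/
def Qmod (n p : ℕ) {ι : Type*} [Fintype ι]
    (hs : ι → MvPolynomial (Fin n ⊕ Fin p) ℝ) (l : ℕ) :
    Set (MvPolynomial (Fin n ⊕ Fin p) ℝ) :=
  {σ | ∃ (σ0 : MvPolynomial (Fin n ⊕ Fin p) ℝ)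
      (σs : ι → MvPolynomial (Fin n ⊕ Fin p) ℝ),
    IsSumSq σ0 ∧ (∀ j, IsSumSq (σs j)) ∧
    σ = σ0 + ∑ j, σs j * hs j ∧
    σ0.totalDegree ≤ 2 * l ∧ ∀ j, (σs j * hs j).totalDegree ≤ 2 * l}

theorem poly_deg_le (P Q : Polynomial ℝ) (h0 : ∀ x, 0 ≤ P.eval x)
    (h1 : ∀ x, P.eval x ≤ Q.eval x) : P.degree ≤ Q.degree := by
  by_contra hlt
  push Not at hlt
  have hP : P ≠ 0 := by
    rintro rfl
    simp at hlt
  have ho := Polynomial.isLittleO_atTop_of_degree_lt (P := Q) (Q := P) hlt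
  have hO : (fun x => P.eval x) =O[Filter.atTop] (fun x => Q.eval x) := by
    apply Asymptotics.IsBigO.of_bound 1
    filter_upwards with x
    rw [one_mul, Real.norm_eq_abs, Real.norm_eq_abs, abs_of_nonneg (h0 x),
      abs_of_nonneg ((h0 x).trans (h1 x))]
    exact h1 x
  have := hO.trans_isLittleO ho
  refine Asymptotics.isLittleO_irrefl ?_ this
  exact (Polynomial.eventually_atTop_not_isRoot P hP).frequently

def lineMap {σ : Type*} (v : σ → ℝ) : MvPolynomial σ ℝ →ₐ[ℝ] Polynomial ℝ :=
  aeval (fun i => Polynomial.C (v i) * Polynomial.X)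

theorem lineMap_eval {σ : Type*} (v : σ → ℝ) (f : MvPolynomial σ ℝ) (t : ℝ) :
    (lineMap v f).eval t = MvPolynomial.eval (fun i => v i * t) f := by
  induction f using MvPolynomial.induction_on with
  | C a => simp [lineMap]
  | add p q hp hq => simp [hp, hq]
  | mul_X p i hp => rw [map_mul, Polynomial.eval_mul, hp]; simp [lineMap]

theorem lineMap_coeff {σ : Type*} (v : σ → ℝ) (f : MvPolynomial σ ℝ) (m : ℕ) :
    (lineMap v f).coeff m = MvPolynomial.eval v (homogeneousComponent m f) := by
  induction f using MvPolynomial.induction_on' with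
  | add p q hp hq => simp [hp, hq]
  | monomial d a =>
    have h1 : lineMap v (monomial d a)
        = Polynomial.C (MvPolynomial.eval v (monomial d a)) * Polynomial.X ^ d.degree := by
      rw [lineMap, aeval_monomial, eval_monomial]
      simp only [mul_pow, Finsupp.prod, Finset.prod_mul_distrib, Finset.prod_pow_eq_pow_sum,
        Finsupp.degree_apply, map_mul, map_prod, map_pow]
      simp [mul_assoc]
    have h2 : homogeneousComponent m (monomial d a) = if d.degree = m then monomial d a else 0 := by
      classical
      ext e
      rw [coeff_homogeneousComponent]
      split_ifs with h3 h4 h4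
      · rfl
      · rw [coeff_monomial, if_neg]; simp; rintro rfl; exact h4 h3
      · rw [coeff_monomial, if_neg]; rintro rfl; exact h3 h4
      · simp
    rw [h1, h2, Polynomial.coeff_C_mul, Polynomial.coeff_X_pow]
    split_ifs with h3 h4 h4
    · simp
    · exact absurd h3.symm h4
    · exact absurd h4.symm h3
    · simp

theorem deg_le_of_le {σ : Type*} (f h : MvPolynomial σ ℝ)
    (h0 : ∀ v, 0 ≤ MvPolynomial.eval v f)
    (h1 : ∀ v, MvPolynomial.eval v f ≤ MvPolynomial.eval v h) :
    f.totalDegree ≤ h.totalDegree := by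
  have key : ∀ m, h.totalDegree < m → homogeneousComponent m f = 0 := by
    intro m hm
    apply MvPolynomial.funext
    intro v
    rw [← lineMap_coeff, map_zero]
    apply Polynomial.coeff_eq_zero_of_degree_lt
    refine (poly_deg_le (lineMap v f) (lineMap v h) ?_ ?_).trans_lt ?_
    · intro x; rw [lineMap_eval]; exact h0 _
    · intro x; rw [lineMap_eval, lineMap_eval]; exact h1 _
    · rw [Polynomial.degree_lt_iff_coeff_zero]
      intro k hk
      rw [lineMap_coeff, homogeneousComponent_eq_zero _ _ (hm.trans_le hk), map_zero]
  rw [totalDegree]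
  apply Finset.sup_le
  intro d hd
  by_contra hlt
  push Not at hlt
  have h3 := congrArg (coeff d) (key d.degree (by simpa [Finsupp.degree_apply, Finsupp.sum] using hlt))
  rw [coeff_homogeneousComponent, if_pos rfl] at h3
  exact (mem_support_iff.mp hd) (by simpa using h3)

theorem eval_sumsq_nonneg {σ : Type*} {s : MvPolynomial σ ℝ} (hs : IsSumSq s) (v : σ → ℝ) :
    0 ≤ MvPolynomial.eval v s := by
  induction hs with
  | zero => simp
  | sq_add a _ ih => simp only [map_add, map_mul]; nlinarith [mul_self_nonneg (MvPolynomial.eval v a)]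

theorem Lz_eq_of_subset (n p : ℕ) (z : (Fin n → ℕ) → (Fin p → ℕ) → ℝ)
    (q : MvPolynomial (Fin n ⊕ Fin p) ℝ) (S : Finset ((Fin n ⊕ Fin p) →₀ ℕ))
    (hS : q.support ⊆ S) : Lz n p z q =
      ∑ d ∈ S, q.coeff d * z (fun k => d (Sum.inl k)) (fun l => d (Sum.inr l)) := by
  apply Finset.sum_subset hS
  intro d _ hd
  rw [notMem_support_iff.mp hd, zero_mul]

theorem Lz_add (n p : ℕ) (z : (Fin n → ℕ) → (Fin p → ℕ) → ℝ)
    (q r : MvPolynomial (Fin n ⊕ Fin p) ℝ) :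
    Lz n p z (q + r) = Lz n p z q + Lz n p z r := by
  classical
  rw [Lz_eq_of_subset n p z q _ Finset.subset_union_left,
    Lz_eq_of_subset n p z r _ Finset.subset_union_right,
    Lz_eq_of_subset n p z (q + r) _ support_add, ← Finset.sum_add_distrib]
  apply Finset.sum_congr rfl
  intro d _
  rw [coeff_add, add_mul]

theorem Lz_zero (n p : ℕ) (z : (Fin n → ℕ) → (Fin p → ℕ) → ℝ) : Lz n p z 0 = 0 := by
  simp [Lz]

theorem Lz_sum (n p : ℕ) (z : (Fin n → ℕ) → (Fin p → ℕ) → ℝ) {ι : Type*} (s : Finset ι)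
    (f : ι → MvPolynomial (Fin n ⊕ Fin p) ℝ) :
    Lz n p z (∑ j ∈ s, f j) = ∑ j ∈ s, Lz n p z (f j) := by
  classical
  induction s using Finset.induction_on with
  | empty => simp [Lz_zero]
  | insert a s ha ih => rw [Finset.sum_insert ha, Finset.sum_insert ha, Lz_add, ih]

theorem Lz_monomial (n p : ℕ) (z : (Fin n → ℕ) → (Fin p → ℕ) → ℝ)
    (d : (Fin n ⊕ Fin p) →₀ ℕ) (a : ℝ) :
    Lz n p z (monomial d a) = a * z (fun k => d (Sum.inl k)) (fun l => d (Sum.inr l)) := by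
  rw [Lz_eq_of_subset n p z _ {d} support_monomial_subset]
  simp

theorem degOK_of_totalDegree (n p i : ℕ) (q : MvPolynomial (Fin n ⊕ Fin p) ℝ)
    (h : q.totalDegree ≤ i) : DegOK n p i q := by
  intro d hd
  have h1 := (le_totalDegree hd).trans h
  rw [Finsupp.sum_fintype _ _ (fun _ => rfl), Fintype.sum_sum_type] at h1
  omega

theorem Lz_sumsq_nonneg (n p k : ℕ) (z : (Fin n → ℕ) → (Fin p → ℕ) → ℝ)
    (h : MvPolynomial (Fin n ⊕ Fin p) ℝ)
    (hq : ∀ q, DegOK n p k q → 0 ≤ Lz n p z (h * q ^ 2))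
    (s : MvPolynomial (Fin n ⊕ Fin p) ℝ) (hs : IsSumSq s) (hd : s.totalDegree ≤ 2 * k + 1) :
    0 ≤ Lz n p z (h * s) := by
  induction hs with
  | zero => simp [Lz_zero]
  | sq_add a hs ih =>
    rename_i s
    have e1 : ∀ v, 0 ≤ MvPolynomial.eval v (a * a) := fun v => by
      rw [map_mul]; exact mul_self_nonneg _
    have e2 := eval_sumsq_nonneg hs
    have d1 := (deg_le_of_le (a * a) (a * a + s) e1
      (fun v => by rw [map_add]; linarith [e2 v])).trans hd
    have d2 := (deg_le_of_le s (a * a + s) e2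
      (fun v => by rw [map_add]; linarith [e1 v])).trans hd
    rw [mul_add, Lz_add]
    refine add_nonneg ?_ (ih d2)
    rw [← pow_two]
    apply hq
    apply degOK_of_totalDegree
    by_cases ha : a = 0
    · simp [ha]
    · rw [totalDegree_mul_of_isDomain ha ha] at d1
      omega

theorem Lz_Qmod_nonneg (n p t l : ℕ)
    (hs : Fin t → MvPolynomial (Fin n ⊕ Fin p) ℝ)
    (z : (Fin n → ℕ) → (Fin p → ℕ) → ℝ)
    (hM : ∀ q, DegOK n p l q → 0 ≤ Lz n p z (q ^ 2))
    (hMloc : ∀ j, ∀ q, DegOK n p (l - halfDeg (hs j)) q → 0 ≤ Lz n p z (hs j * q ^ 2))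
    (f : MvPolynomial (Fin n ⊕ Fin p) ℝ) (hf : f ∈ Qmod n p hs l) : 0 ≤ Lz n p z f := by
  obtain ⟨σ0, σs, h0, hσ, rfl, d0, dj⟩ := hf
  rw [Lz_add, Lz_sum]
  refine add_nonneg ?_ (Finset.sum_nonneg fun j _ => ?_)
  · have := Lz_sumsq_nonneg n p l z 1 (by simpa using hM) σ0 h0 (by omega)
    simpa using this
  · by_cases hh : hs j = 0
    · simp [hh, Lz_zero]
    by_cases hz : σs j = 0
    · simp [hz, Lz_zero]
    rw [mul_comm]
    refine Lz_sumsq_nonneg n p _ z (hs j) (hMloc j) _ (hσ j) ?_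
    have := dj j
    rw [totalDegree_mul_of_isDomain hz hh] at this
    unfold halfDeg
    omega

/-- if both `N ± x^α y^β` lie in the truncated quadratic module `Q(l)`,
then every sequence `z` with `z_{00} = 1`, `M_l(z) ⪰ 0` and `M_{l-v_j}(h_j z) ⪰ 0` for
all `j` (positive semidefiniteness expressed via the quadratic forms `L_z(q²)`, resp.
`L_z(h_j q²)`) satisfies `|z_{αβ}| = |L_z(x^α y^β)| ≤ N`. -/
theorem stmt18 (n p t l : ℕ)
    (hs : Fin t → MvPolynomial (Fin n ⊕ Fin p) ℝ)
    (α : Fin n → ℕ) (β : Fin p → ℕ) (N : ℝ)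
    (mono : MvPolynomial (Fin n ⊕ Fin p) ℝ)
    (hmono : mono = monomial (Finsupp.equivFunOnFinite.symm (Sum.elim α β)) (1 : ℝ))
    (hplus : C N + mono ∈ Qmod n p hs l)
    (hminus : C N - mono ∈ Qmod n p hs l)
    (z : (Fin n → ℕ) → (Fin p → ℕ) → ℝ)
    (hz1 : z (fun _ => 0) (fun _ => 0) = 1)
    (hM : ∀ q, DegOK n p l q → 0 ≤ Lz n p z (q ^ 2))
    (hMloc : ∀ j, ∀ q, DegOK n p (l - halfDeg (hs j)) q → 0 ≤ Lz n p z (hs j * q ^ 2)) :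
    Lz n p z mono = z α β ∧ |z α β| ≤ N := by
  have hL : Lz n p z mono = z α β := by
    rw [hmono, Lz_monomial]
    simp
  have hC : Lz n p z (C N) = N := by
    rw [C_apply, Lz_monomial]
    simp [hz1]
  have hneg : Lz n p z (C N - mono) = N - z α β := by
    have := Lz_add n p z (C N - mono) mono
    rw [sub_add_cancel, hC, hL] at this
    linarith
  have a1 := Lz_Qmod_nonneg n p t l hs z hM hMloc _ hplus
  have a2 := Lz_Qmod_nonneg n p t l hs z hM hMloc _ hminus
  rw [Lz_add, hC, hL] at a1
  rw [hneg] at a2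
  exact ⟨hL, abs_le.mpr ⟨by linarith, by linarith⟩⟩
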